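/- arXiv:2305.08463 — 3 statements merged into one kernel-verified Lean document; each statement's English description precedes it below -/
import Mathlib

section
/- Under Assumptions RS and QM, for every constant C₁ > 0 there exists a constant C₂ > 0 such that every u ∈ [0,∞) with K̂(u) ≥ C₁ satisfies Ǩ(u) ≥ C₂; that is, {u ∈ [0,∞) : K̂(u) ≥ C₁} ⊆ {u ∈ [0,∞) : Ǩ(u) ≥ C₂}. -/
open Set Filter Topology MeasureTheory
open scoped BigOperators RealInnerProductSpace

noncomputable section

/-- Euclidean space `ℝ^d`. -/
abbrev Euc (d : ℕ) := EuclideanSpace ℝ (Fin d)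

/-- The convex subdifferential of a function `g` (viewed as a function on `[0,∞)`) at `u`. -/
def subdiffIci (g : ℝ → ℝ) (u : ℝ) : Set ℝ :=
  {c : ℝ | ∀ v ∈ Set.Ici (0:ℝ), g v - g u ≥ c * (v - u)}

/-- Assumption RS: the kernel `K` is bounded, continuous, non-negative, normalized, and
radially symmetric with profile `Khat`. -/
structure AssumptionRS (d : ℕ) (K : Euc d → ℝ) (Khat : ℝ → ℝ) : Prop where
  bounded : ∃ M : ℝ, ∀ x, K x ≤ M
  cont : Continuous K
  nonneg : ∀ x, 0 ≤ K x
  normalized : ∫ x, K x = 1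
  radial : ∀ x, K x = Khat (‖x‖ ^ 2 / 2)

/-- Assumption QM for the profile `Khat`, together with the selection `Kcheck`:
`Khat` is convex and non-increasing on `[0,∞)`, its right derivative at `0` exists as a real
number and equals `-(Kcheck 0)` (i.e. `Kcheck 0 = -Khat'(0+) > -∞`), and for every `u > 0`,
`-(Kcheck u)` belongs to the subdifferential of `Khat` at `u`. -/
structure AssumptionQM (Khat Kcheck : ℝ → ℝ) : Prop where
  convexOn : ConvexOn ℝ (Set.Ici (0:ℝ)) Khat
  antitoneOn : AntitoneOn Khat (Set.Ici (0:ℝ))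
  rderiv0 : Filter.Tendsto (fun v => (Khat v - Khat 0) / v)
      (nhdsWithin 0 (Set.Ioi 0)) (nhds (-(Kcheck 0)))
  subdiff : ∀ u : ℝ, 0 < u → -(Kcheck u) ∈ subdiffIci Khat u

/-!
An integrable function on a space of infinite measure takes arbitrarily small values, so some
`w ≥ 0` has `Khat w < C₁`. Every `u` with `C₁ ≤ Khat u` then lies to the left of `w`, and the
supporting line of `Khat` at `u`, of slope `-(Kcheck u)`, must drop by at least `C₁ - Khat w` on
`[u, w]`. This forces `Kcheck u ≥ (C₁ - Khat w) / w`, uniformly in `u`.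
-/

theorem exists_norm_lt_of_integrable {α E : Type*} [MeasurableSpace α] {μ : Measure α}
    [NormedAddCommGroup E] {f : α → E} (hμ : μ univ = ⊤) (hf : Integrable f μ)
    {ε : ℝ} (hε : 0 < ε) : ∃ x, ‖f x‖ < ε := by
  by_contra! hge
  have hfin : μ {x | ε ≤ ‖f x‖} < ⊤ := hf.measure_norm_ge_lt_top hε
  rw [show {x | ε ≤ ‖f x‖} = univ from eq_univ_of_forall hge, hμ] at hfin
  exact hfin.false

theorem mem_subdiffIci_zero_of_hasDerivWithinAt {g : ℝ → ℝ} {c : ℝ}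
    (hg : ConvexOn ℝ (Ici 0) g) (hc : HasDerivWithinAt g c (Ioi 0) 0) :
    c ∈ subdiffIci g 0 := by
  intro v hv
  rcases (mem_Ici.1 hv).eq_or_lt with rfl | hpos
  · simp
  have hslope : c ≤ slope g 0 v :=
    hg.le_slope_of_hasDerivWithinAt_Ioi self_mem_Ici hv hpos hc
  rwa [slope_def_field, le_div_iff₀ (sub_pos.2 hpos)] at hslope

theorem div_le_of_neg_mem_subdiffIci {g : ℝ → ℝ} {k u w : ℝ} (hk : -k ∈ subdiffIci g u)
    (hu : 0 ≤ u) (huw : u < w) (hg : g w ≤ g u) : (g u - g w) / w ≤ k := by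
  have hw : 0 < w := hu.trans_lt huw
  have hdrop : g u - g w ≤ k * (w - u) := by linarith [hk w hw.le]
  have hk_nonneg : 0 ≤ k :=
    nonneg_of_mul_nonneg_left ((sub_nonneg.2 hg).trans hdrop) (sub_pos.2 huw)
  rw [div_le_iff₀ hw]
  exact hdrop.trans (mul_le_mul_of_nonneg_left (sub_le_self w hu) hk_nonneg)

namespace AssumptionQM

variable {Khat Kcheck : ℝ → ℝ}

theorem hasDerivWithinAt_zero (hQM : AssumptionQM Khat Kcheck) :
    HasDerivWithinAt Khat (-(Kcheck 0)) (Ioi 0) 0 := by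
  rw [hasDerivWithinAt_iff_tendsto_slope' self_notMem_Ioi]
  simpa only [slope_fun_def_field, sub_zero] using hQM.rderiv0

theorem neg_kcheck_mem_subdiffIci (hQM : AssumptionQM Khat Kcheck) {u : ℝ} (hu : 0 ≤ u) :
    -(Kcheck u) ∈ subdiffIci Khat u := by
  rcases hu.eq_or_lt with rfl | hpos
  · exact mem_subdiffIci_zero_of_hasDerivWithinAt hQM.convexOn hQM.hasDerivWithinAt_zero
  · exact hQM.subdiff u hpos

theorem exists_level_subset_level (hQM : AssumptionQM Khat Kcheck) {C₁ w : ℝ} (hw : 0 ≤ w)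
    (hC₁ : Khat w < C₁) :
    ∃ C₂ : ℝ, 0 < C₂ ∧
      {u : ℝ | 0 ≤ u ∧ C₁ ≤ Khat u} ⊆ {u : ℝ | 0 ≤ u ∧ C₂ ≤ Kcheck u} := by
  -- The denominator is `w + 1` because `w = 0` is allowed.
  refine ⟨(C₁ - Khat w) / (w + 1), div_pos (sub_pos.2 hC₁) (by positivity), ?_⟩
  rintro u ⟨hu, hC₁u⟩
  have hlt : Khat w < Khat u := hC₁.trans_le hC₁u
  have huw : u < w := hQM.antitoneOn.reflect_lt hw hu hlt
  refine ⟨hu, ?_⟩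
  calc (C₁ - Khat w) / (w + 1) ≤ (Khat u - Khat w) / w :=
        div_le_div₀ (sub_nonneg.2 hlt.le) (by gcongr) (hu.trans_lt huw) (by simp)
    _ ≤ Kcheck u :=
        div_le_of_neg_mem_subdiffIci (hQM.neg_kcheck_mem_subdiffIci hu) hu huw hlt.le

end AssumptionQM

theorem khat_level_subset_kcheck_level_general {E : Type*} [Norm E] [MeasurableSpace E]
    {μ : Measure E} (hμ : μ univ = ⊤) {K : E → ℝ} {Khat Kcheck : ℝ → ℝ} (hK : Integrable K μ)
    (hradial : ∀ x, K x = Khat (‖x‖ ^ 2 / 2)) (hQM : AssumptionQM Khat Kcheck) :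
    ∀ C₁ : ℝ, 0 < C₁ → ∃ C₂ : ℝ, 0 < C₂ ∧
      {u : ℝ | 0 ≤ u ∧ C₁ ≤ Khat u} ⊆ {u : ℝ | 0 ≤ u ∧ C₂ ≤ Kcheck u} := by
  intro C₁ hC₁
  obtain ⟨x, hx⟩ := exists_norm_lt_of_integrable hμ hK hC₁
  have hlt : Khat (‖x‖ ^ 2 / 2) < C₁ := hradial x ▸ (Real.le_norm_self (K x)).trans_lt hx
  exact hQM.exists_level_subset_level (by positivity) hlt

/-- Under Assumptions RS and QM, for every `C₁ > 0` there exists `C₂ > 0` such that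
`{u ∈ [0,∞) : K̂(u) ≥ C₁} ⊆ {u ∈ [0,∞) : Ǩ(u) ≥ C₂}`. -/
theorem khat_level_subset_kcheck_level
    (d : ℕ) (hd : 0 < d) (K : Euc d → ℝ) (Khat Kcheck : ℝ → ℝ)
    (hRS : AssumptionRS d K Khat) (hQM : AssumptionQM Khat Kcheck) :
    ∀ C₁ : ℝ, 0 < C₁ → ∃ C₂ : ℝ, 0 < C₂ ∧
      {u : ℝ | 0 ≤ u ∧ C₁ ≤ Khat u} ⊆ {u : ℝ | 0 ≤ u ∧ C₂ ≤ Kcheck u} := by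
  have : Nonempty (Fin d) := Fin.pos_iff_nonempty.1 hd
  exact khat_level_subset_kcheck_level_general (measure_univ_of_isAddLeftInvariant volume)
    (integrable_of_integral_eq_one hRS.normalized) hRS.radial hQM
end
end

section
/- Assume Assumptions RS and QM, and let (y_t)_{t∈ℕ} be the mode estimate sequence obtained by the MS iteration starting from y₁ with f(y₁) > 0. Then there exists a constant C > 0 such that for every t ∈ ℕ there is an index i_t ∈ {1,…,n} with Ǩ(‖(y_t − x_{i_t})/h‖²/2) ≥ C, and consequently f̌(y_t) ≥ C/(n h^d) for every t ∈ ℕ. -/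
open Set Filter Topology MeasureTheory
open scoped BigOperators RealInnerProductSpace

noncomputable section

/-- The kernel density estimate `f(y) = (1/(n hᵈ)) ∑ᵢ K((y - xᵢ)/h)`. -/
def KDE (d n : ℕ) (K : Euc d → ℝ) (x : Fin n → Euc d) (h : ℝ) (y : Euc d) : ℝ :=
  (1 / ((n : ℝ) * h ^ d)) * ∑ i : Fin n, K (h⁻¹ • (y - x i))

/-- `f̌(y) = (1/(n hᵈ)) ∑ᵢ Ǩ(‖(y - xᵢ)/h‖²/2)`. -/
def fcheck (d n : ℕ) (Kcheck : ℝ → ℝ) (x : Fin n → Euc d) (h : ℝ) (y : Euc d) : ℝ :=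
  (1 / ((n : ℝ) * h ^ d)) * ∑ i : Fin n, Kcheck (‖h⁻¹ • (y - x i)‖ ^ 2 / 2)

/-- The mean shift vector `m(y)`: zero if `f̌(y) = 0`, and otherwise
`m(y) = ∑ᵢ Ǩ(‖(y - xᵢ)/h‖²/2)(xᵢ - y) / ∑ᵢ Ǩ(‖(y - xᵢ)/h‖²/2)`. -/
def msMap (d n : ℕ) (Kcheck : ℝ → ℝ) (x : Fin n → Euc d) (h : ℝ) (y : Euc d) : Euc d :=
  if fcheck d n Kcheck x h y = 0 then 0
  else (∑ i : Fin n, Kcheck (‖h⁻¹ • (y - x i)‖ ^ 2 / 2))⁻¹ •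
    ∑ i : Fin n, Kcheck (‖h⁻¹ • (y - x i)‖ ^ 2 / 2) • (x i - y)

/-- `y` is a mean shift iteration sequence: `y (t+1) = y t + m (y t)` for all `t`. -/
def MSSeq (d n : ℕ) (Kcheck : ℝ → ℝ) (x : Fin n → Euc d) (h : ℝ) (y : ℕ → Euc d) : Prop :=
  ∀ t : ℕ, y (t + 1) = y t + msMap d n Kcheck x h (y t)

/-- `f` has the Łojasiewicz property on the set `S`. -/
def LojasiewiczOn (d : ℕ) (f : Euc d → ℝ) (S : Set (Euc d)) : Prop :=
  ∃ ε > (0:ℝ), ∃ c > (0:ℝ), ∃ θ ∈ Set.Ico (0:ℝ) 1,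
    ∀ x' ∈ S, ∀ x ∈ S, ‖x' - x‖ < ε → 0 ≤ f x' - f x →
      ‖gradient f x‖ ≥ c * (f x' - f x) ^ θ

/-- `f` satisfies the Łojasiewicz inequality at `ybar` with exponent `θ`, on the set `S`. -/
def LojasiewiczAtWith (d : ℕ) (f : Euc d → ℝ) (S : Set (Euc d)) (ybar : Euc d) (θ : ℝ) : Prop :=
  ∃ ε > (0:ℝ), ∃ c > (0:ℝ),
    ∀ y ∈ S, ‖ybar - y‖ < ε → 0 ≤ f ybar - f y →
      ‖gradient f y‖ ≥ c * (f ybar - f y) ^ θ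

/-!
Convexity of `Khat` makes each profile term lie above its tangent at the current iterate, a function
of the squared distance alone. Summed over the data these minorants form a concave quadratic whose
maximizer is the mean shift step, so the sum of the profile values never decreases along the
iteration, and at every time some data point has a profile value at least the initial average.
Since an integrable kernel takes arbitrarily small values, `Khat v` lies below this average for
some `v`; the drop of `Khat` from that data point to `v` is at most `v` times the slope, which
bounds `Kcheck` away from zero.
-/

lemma exists_lt_of_integrable {α : Type*} [MeasurableSpace α] {μ : Measure α} {f : α → ℝ}
    (hf : Integrable f μ) (hμ : μ univ = ⊤) {s : ℝ} (hs : 0 < s) : ∃ a, f a < s := by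
  by_contra! hle
  have huniv : {a | s ≤ f a} = univ := eq_univ_of_forall hle
  exact (hf.measure_ge_lt_top hs).ne (huniv ▸ hμ)

lemma sum_mul_norm_sq_sub_norm_add_sq {ι F : Type*} [Fintype ι] [NormedAddCommGroup F]
    [InnerProductSpace ℝ F] {w : ι → ℝ} {v : ι → F} {δ : F}
    (hδ : (∑ i, w i) • δ = -∑ i, w i • v i) :
    ∑ i, w i * (‖v i‖ ^ 2 - ‖v i + δ‖ ^ 2) = (∑ i, w i) * ‖δ‖ ^ 2 := by
  have hinner : ∑ i, w i * ⟪v i, δ⟫ = -((∑ i, w i) * ‖δ‖ ^ 2) := by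
    simp only [← real_inner_self_eq_norm_sq, ← real_inner_smul_left, hδ, inner_neg_left,
      sum_inner, neg_neg]
  calc ∑ i, w i * (‖v i‖ ^ 2 - ‖v i + δ‖ ^ 2)
      = ∑ i, (-2 * (w i * ⟪v i, δ⟫) - w i * ‖δ‖ ^ 2) := by
        refine Finset.sum_congr rfl fun i _ => ?_
        rw [norm_add_sq_real]
        ring
    _ = (∑ i, w i) * ‖δ‖ ^ 2 := by
        rw [Finset.sum_sub_distrib, ← Finset.mul_sum, ← Finset.sum_mul, hinner]
        ring

/-- `q` is obtained from `p` by one mean shift step for the data `x`, where `L` plays the role of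
the inverse bandwidth: `L = h⁻¹ • id` for a scalar bandwidth `h`, `L = H^(-1/2)` for a bandwidth
matrix `H`. The equation is kept free of division; it leaves `q` arbitrary if all weights vanish. -/
def IsMeanShiftStep {ι E F : Type*} [Fintype ι] [AddCommGroup E] [Module ℝ E]
    [NormedAddCommGroup F] [NormedSpace ℝ F] (Kcheck : ℝ → ℝ) (x : ι → E) (L : E →ₗ[ℝ] F)
    (p q : E) : Prop :=
  (∑ i, Kcheck (‖L (p - x i)‖ ^ 2 / 2)) • (q - p) =
    ∑ i, Kcheck (‖L (p - x i)‖ ^ 2 / 2) • (x i - p)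

namespace AssumptionQM

variable {Khat Kcheck : ℝ → ℝ}

lemma neg_kcheck_mul_sub_le (hQM : AssumptionQM Khat Kcheck) {u v : ℝ} (hu : 0 ≤ u)
    (hv : 0 ≤ v) : -Kcheck u * (v - u) ≤ Khat v - Khat u := by
  rcases hu.eq_or_lt with rfl | hu
  · rcases hv.eq_or_lt with rfl | hv
    · simp
    have hslope : -Kcheck 0 ≤ (Khat v - Khat 0) / v := by
      refine le_of_tendsto hQM.rderiv0 ?_
      filter_upwards [Ioo_mem_nhdsGT hv] with w ⟨hw, hwv⟩
      simpa using hQM.convexOn.secant_mono self_mem_Ici hw.le hv.le hw.ne' hv.ne' hwv.le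
    simpa using (le_div_iff₀ hv).1 hslope
  · exact hQM.subdiff u hu v hv

lemma kcheck_nonneg (hQM : AssumptionQM Khat Kcheck) {u : ℝ} (hu : 0 ≤ u) : 0 ≤ Kcheck u := by
  have hu' : 0 ≤ u + 1 := by positivity
  linarith [hQM.neg_kcheck_mul_sub_le hu hu', hQM.antitoneOn hu hu' (by linarith)]

lemma profile_sub_le_kcheck_mul (hQM : AssumptionQM Khat Kcheck) {u v : ℝ} (hu : 0 ≤ u)
    (hv : 0 ≤ v) : Khat u - Khat v ≤ Kcheck u * v := by
  linarith [hQM.neg_kcheck_mul_sub_le hu hv, mul_nonneg (hQM.kcheck_nonneg hu) hu]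

variable {ι E F : Type*} [Fintype ι] [AddCommGroup E] [Module ℝ E] [NormedAddCommGroup F]
  [InnerProductSpace ℝ F] {x : ι → E} {L : E →ₗ[ℝ] F}

lemma sum_profile_le_of_isMeanShiftStep (hQM : AssumptionQM Khat Kcheck) {p q : E}
    (hpq : IsMeanShiftStep Kcheck x L p q) :
    ∑ i, Khat (‖L (p - x i)‖ ^ 2 / 2) ≤ ∑ i, Khat (‖L (q - x i)‖ ^ 2 / 2) := by
  set w : ι → ℝ := fun i => Kcheck (‖L (p - x i)‖ ^ 2 / 2)
  have hw : ∀ i, 0 ≤ w i := fun i => hQM.kcheck_nonneg (by positivity)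
  have hshift : (∑ i, w i) • L (q - p) = -∑ i, w i • L (p - x i) := by
    rw [← map_smul, hpq]
    simp only [map_sum, map_smul, ← Finset.sum_neg_distrib, ← smul_neg, ← map_neg, neg_sub, w]
  have htangent : ∀ i, w i * (‖L (p - x i)‖ ^ 2 - ‖L (p - x i) + L (q - p)‖ ^ 2) / 2 ≤
      Khat (‖L (q - x i)‖ ^ 2 / 2) - Khat (‖L (p - x i)‖ ^ 2 / 2) := by
    intro i
    rw [← map_add, sub_add_sub_cancel']
    refine le_trans (le_of_eq ?_) (hQM.neg_kcheck_mul_sub_le (by positivity) (by positivity))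
    ring
  rw [← sub_nonneg, ← Finset.sum_sub_distrib]
  calc 0 ≤ (∑ i, w i) * ‖L (q - p)‖ ^ 2 / 2 := by
        have := Finset.sum_nonneg fun i (_ : i ∈ Finset.univ) => hw i
        positivity
    _ = ∑ i, w i * (‖L (p - x i)‖ ^ 2 - ‖L (p - x i) + L (q - p)‖ ^ 2) / 2 := by
        rw [← sum_mul_norm_sq_sub_norm_add_sq hshift, Finset.sum_div]
    _ ≤ _ := Finset.sum_le_sum fun i _ => htangent i

lemma monotone_sum_profile (hQM : AssumptionQM Khat Kcheck) {y : ℕ → E}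
    (hy : ∀ t, IsMeanShiftStep Kcheck x L (y t) (y (t + 1))) :
    Monotone fun t => ∑ i, Khat (‖L (y t - x i)‖ ^ 2 / 2) :=
  monotone_nat_of_le_succ fun t => hQM.sum_profile_le_of_isMeanShiftStep (hy t)

end AssumptionQM

theorem ms_fcheck_lower_bound_general {ι E F : Type*} [Fintype ι] [AddCommGroup E] [Module ℝ E]
    [NormedAddCommGroup F] [InnerProductSpace ℝ F] {Khat Kcheck : ℝ → ℝ}
    (hQM : AssumptionQM Khat Kcheck) {x : ι → E} {L : E →ₗ[ℝ] F} {y : ℕ → E}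
    (hy : ∀ t, IsMeanShiftStep Kcheck x L (y t) (y (t + 1)))
    (hy0 : ∃ v, 0 ≤ v ∧ Fintype.card ι * Khat v < ∑ i, Khat (‖L (y 0 - x i)‖ ^ 2 / 2)) :
    ∃ C : ℝ, 0 < C ∧ ∀ t : ℕ,
      (∃ i, C ≤ Kcheck (‖L (y t - x i)‖ ^ 2 / 2)) ∧
      C ≤ ∑ i, Kcheck (‖L (y t - x i)‖ ^ 2 / 2) := by
  obtain ⟨v, hv, hvy⟩ := hy0
  have hι : Nonempty ι := by
    by_contra! hempty
    simp at hvy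
  set gap : ℝ := (∑ i, Khat (‖L (y 0 - x i)‖ ^ 2 / 2)) / Fintype.card ι - Khat v
  have hgap : 0 < gap := by
    rw [sub_pos, lt_div_iff₀' (by positivity)]
    exact hvy
  have hexists : ∀ t, ∃ i, gap ≤ Khat (‖L (y t - x i)‖ ^ 2 / 2) - Khat v := by
    intro t
    obtain ⟨i, -, hi⟩ := Finset.exists_le_of_sum_le Finset.univ_nonempty <|
      show ∑ _i : ι, (∑ i, Khat (‖L (y 0 - x i)‖ ^ 2 / 2)) / Fintype.card ι ≤
          ∑ i, Khat (‖L (y t - x i)‖ ^ 2 / 2) by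
        simpa [mul_div_cancel₀] using hQM.monotone_sum_profile hy t.zero_le
    exact ⟨i, sub_le_sub_right hi _⟩
  have hnonneg : ∀ t i, 0 ≤ Kcheck (‖L (y t - x i)‖ ^ 2 / 2) := fun t i =>
    hQM.kcheck_nonneg (by positivity)
  -- The denominator is `v + 1` rather than `v` so that it is positive also for `v = 0`.
  refine ⟨gap / (v + 1), by positivity, fun t => ?_⟩
  obtain ⟨i, hi⟩ := hexists t
  have hC : gap / (v + 1) ≤ Kcheck (‖L (y t - x i)‖ ^ 2 / 2) := by
    rw [div_le_iff₀ (by positivity)]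
    linarith [hQM.profile_sub_le_kcheck_mul (u := ‖L (y t - x i)‖ ^ 2 / 2) (by positivity) hv,
      hnonneg t i]
  exact ⟨⟨i, hC⟩, hC.trans (Finset.single_le_sum (fun j _ => hnonneg t j) (Finset.mem_univ i))⟩

section Euclidean

variable {d n : ℕ} {K : Euc d → ℝ} {Khat Kcheck : ℝ → ℝ} {x : Fin n → Euc d} {h : ℝ}

lemma AssumptionRS.exists_profile_lt (hRS : AssumptionRS d K Khat) (hd : 0 < d) {s : ℝ}
    (hs : 0 < s) : ∃ v, 0 ≤ v ∧ Khat v < s := by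
  have : Nonempty (Fin d) := ⟨⟨0, hd⟩⟩
  have hint : Integrable K := .of_integral_ne_zero (by simp [hRS.normalized])
  obtain ⟨z, hz⟩ := exists_lt_of_integrable hint (measure_univ_of_isAddLeftInvariant _) hs
  exact ⟨‖z‖ ^ 2 / 2, by positivity, hRS.radial z ▸ hz⟩

lemma AssumptionRS.kde_eq_sum_profile_div (hRS : AssumptionRS d K Khat) (p : Euc d) :
    KDE d n K x h p = (∑ i, Khat (‖h⁻¹ • (p - x i)‖ ^ 2 / 2)) / (n * h ^ d) := by
  simp only [KDE, hRS.radial, one_div_mul_eq_div]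

lemma AssumptionRS.exists_card_mul_profile_lt_sum (hRS : AssumptionRS d K Khat) (hd : 0 < d)
    (hn : 0 < n) (hh : 0 < h) {p : Euc d} (hp : 0 < KDE d n K x h p) :
    ∃ v, 0 ≤ v ∧
      Fintype.card (Fin n) * Khat v < ∑ i, Khat (‖h⁻¹ • (p - x i)‖ ^ 2 / 2) := by
  have hn' : (0 : ℝ) < n := Nat.cast_pos.2 hn
  rw [hRS.kde_eq_sum_profile_div, div_pos_iff_of_pos_right (by positivity)] at hp
  obtain ⟨v, hv, hlt⟩ := hRS.exists_profile_lt hd (div_pos hp hn')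
  exact ⟨v, hv, by rwa [Fintype.card_fin, ← lt_div_iff₀' hn']⟩

lemma fcheck_eq_sum_div (p : Euc d) :
    fcheck d n Kcheck x h p =
      (∑ i, Kcheck (‖h⁻¹ • (p - x i)‖ ^ 2 / 2)) / (n * h ^ d) :=
  one_div_mul_eq_div _ _

lemma div_le_fcheck (hh : 0 ≤ h) {p : Euc d} {C : ℝ}
    (hC : C ≤ ∑ i, Kcheck (‖h⁻¹ • (p - x i)‖ ^ 2 / 2)) :
    C / (n * h ^ d) ≤ fcheck d n Kcheck x h p := by
  rw [fcheck_eq_sum_div]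
  gcongr

lemma isMeanShiftStep_add_msMap (hQM : AssumptionQM Khat Kcheck) (hnh : (n : ℝ) * h ^ d ≠ 0)
    (p : Euc d) :
    IsMeanShiftStep Kcheck x (h⁻¹ • LinearMap.id : Euc d →ₗ[ℝ] Euc d) p
      (p + msMap d n Kcheck x h p) := by
  simp only [IsMeanShiftStep, LinearMap.smul_apply, LinearMap.id_apply, add_sub_cancel_left, msMap,
    fcheck_eq_sum_div, div_eq_zero_iff, hnh, or_false]
  split_ifs with hsum
  · have hweight := (Finset.sum_eq_zero_iff_of_nonneg fun i _ =>
      hQM.kcheck_nonneg (by positivity)).1 hsum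
    rw [smul_zero, Finset.sum_eq_zero fun i hi => by rw [hweight i hi, zero_smul]]
  · exact smul_inv_smul₀ hsum _

lemma MSSeq.isMeanShiftStep (hQM : AssumptionQM Khat Kcheck) (hn : 0 < n) (hh : 0 < h)
    {y : ℕ → Euc d} (hy : MSSeq d n Kcheck x h y) (t : ℕ) :
    IsMeanShiftStep Kcheck x (h⁻¹ • LinearMap.id : Euc d →ₗ[ℝ] Euc d) (y t) (y (t + 1)) :=
  hy t ▸ isMeanShiftStep_add_msMap hQM (by positivity) (y t)

end Euclidean

/-- Under Assumptions RS and QM, if the MS iteration starts from `y 0` with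
`f (y 0) > 0`, then there is `C > 0` such that for every `t` some index `i_t` satisfies
`Ǩ(‖(y t − x_{i_t})/h‖²/2) ≥ C`, and consequently `f̌(y t) ≥ C/(n hᵈ)` for every `t`. -/
theorem ms_fcheck_lower_bound
    (d n : ℕ) (hd : 0 < d) (hn : 0 < n)
    (K : Euc d → ℝ) (Khat Kcheck : ℝ → ℝ)
    (hRS : AssumptionRS d K Khat) (hQM : AssumptionQM Khat Kcheck)
    (x : Fin n → Euc d) (h : ℝ) (hh : 0 < h)
    (y : ℕ → Euc d) (hy : MSSeq d n Kcheck x h y)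
    (hy0 : 0 < KDE d n K x h (y 0)) :
    ∃ C : ℝ, 0 < C ∧ ∀ t : ℕ,
      (∃ i : Fin n, C ≤ Kcheck (‖h⁻¹ • (y t - x i)‖ ^ 2 / 2)) ∧
      C / ((n : ℝ) * h ^ d) ≤ fcheck d n Kcheck x h (y t) := by
  obtain ⟨C, hC, hlow⟩ := ms_fcheck_lower_bound_general hQM (hy.isMeanShiftStep hQM hn hh)
    (hRS.exists_card_mul_profile_lt_sum hd hn hh hy0)
  exact ⟨C, hC, fun t => (hlow t).imp_right (div_le_fcheck hh.le)⟩
end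
end

section
/- Assume Assumptions RS and QM, that the kernel K is differentiable on ℝ^d, and let y ∈ ℝ^d satisfy f̌(y) ≠ 0. Then the KDE f is differentiable at y and the MS update is a gradient ascent step with adaptive step size: m(y) = (h²/f̌(y))·∇f(y), i.e. y + m(y) = y + (h²/f̌(y))·∇f(y). -/
open Set Filter Topology MeasureTheory
open scoped BigOperators RealInnerProductSpace

noncomputable section

/-
A differentiable radially symmetric kernel `K z = K̂ (‖z‖² / 2)` satisfies
`∇K z = -Ǩ (‖z‖² / 2) • z` even where the profile is only known to have a subgradient. If `c` is a
subgradient of `K̂` at `‖z‖² / 2`, then `w ↦ K w - c * (‖w‖² / 2)` is minimal at `z`, so its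
gradient `∇K z - c • z` vanishes there; at the origin both sides are zero because `K` is even.
By the chain rule, the gradient of the KDE is then the mean shift numerator up to scaling.
-/

section Even

variable (𝕜 : Type*) [NontriviallyNormedField 𝕜] [CharZero 𝕜]
  {E F : Type*} [NormedAddCommGroup E] [NormedSpace 𝕜 E] [NormedAddCommGroup F] [NormedSpace 𝕜 F]

theorem fderiv_zero_of_even {f : E → F} (hf : Function.Even f) : fderiv 𝕜 f 0 = 0 := by
  have hneg : fderiv 𝕜 f 0 = -fderiv 𝕜 f 0 :=
    calc fderiv 𝕜 f 0 = fderiv 𝕜 (fun z => f ((-1 : 𝕜) • z)) 0 := by simp only [neg_one_smul, hf _]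
      _ = -fderiv 𝕜 f 0 := by rw [fderiv_comp_smul, smul_zero, neg_one_smul]
  have : IsAddTorsionFree (E →L[𝕜] F) := .of_isTorsionFree 𝕜 _
  exact self_eq_neg.mp hneg

end Even

section Gradient

variable {E : Type*} [NormedAddCommGroup E] [InnerProductSpace ℝ E] [CompleteSpace E]

theorem hasGradientAt_norm_sq_div_two (z : E) : HasGradientAt (fun w => ‖w‖ ^ 2 / 2) z z := by
  rw [hasGradientAt_iff_hasFDerivAt]
  refine ((hasStrictFDerivAt_norm_sq z).hasFDerivAt.mul_const (2⁻¹ : ℝ)).congr_fderiv ?_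
  ext v
  simp

theorem hasGradientAt_comp_smul_sub {f : E → ℝ} {f' x y : E} {a : ℝ}
    (hf : HasGradientAt f f' (a • (y - x))) :
    HasGradientAt (fun z => f (a • (z - x))) (a • f') y := by
  rw [hasGradientAt_iff_hasFDerivAt] at hf ⊢
  refine (hf.comp y (((hasFDerivAt_id y).sub_const x).const_smul a)).congr_fderiv ?_
  ext v
  simp

theorem hasGradientAt_const_mul_sum {ι : Type*} {s : Finset ι} {f : ι → E → ℝ} {f' : ι → E} {y : E}
    (b : ℝ) (hf : ∀ i ∈ s, HasGradientAt (f i) (f' i) y) :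
    HasGradientAt (fun z => b * ∑ i ∈ s, f i z) (b • ∑ i ∈ s, f' i) y := by
  simp only [hasGradientAt_iff_hasFDerivAt, map_smulₛₗ, map_sum] at hf ⊢
  exact (HasFDerivAt.fun_sum hf).const_mul b

theorem hasGradientAt_of_mem_subdiffIci {K : E → ℝ} {g : ℝ → ℝ}
    (hrad : ∀ w, K w = g (‖w‖ ^ 2 / 2)) {c : ℝ} {z : E} (hc : c ∈ subdiffIci g (‖z‖ ^ 2 / 2))
    (hK : DifferentiableAt ℝ K z) : HasGradientAt K (c • z) z := by
  have hmin : IsLocalMin (fun w => K w - c * (‖w‖ ^ 2 / 2)) z := by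
    refine Eventually.of_forall fun w => ?_
    have hsub := hc (‖w‖ ^ 2 / 2) (mem_Ici.mpr (by positivity))
    rw [← hrad, ← hrad] at hsub
    linarith
  have hquad := (hasGradientAt_norm_sq_div_two z).hasFDerivAt.const_mul c
  have hcrit := hmin.hasFDerivAt_eq_zero (hK.hasFDerivAt.sub hquad)
  rw [hasGradientAt_iff_hasFDerivAt, map_smul, ← sub_eq_zero.mp hcrit]
  exact hK.hasFDerivAt

theorem hasGradientAt_radial {K : E → ℝ} {g k : ℝ → ℝ} (hrad : ∀ w, K w = g (‖w‖ ^ 2 / 2))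
    (hk : ∀ u, 0 < u → -k u ∈ subdiffIci g u) {z : E} (hK : DifferentiableAt ℝ K z) :
    HasGradientAt K (-k (‖z‖ ^ 2 / 2) • z) z := by
  rcases eq_or_ne z 0 with rfl | hz
  · have heven : Function.Even K := fun w => by rw [hrad, hrad, norm_neg]
    rw [smul_zero, hasGradientAt_iff_hasFDerivAt, map_zero, ← fderiv_zero_of_even ℝ heven]
    exact hK.hasFDerivAt
  · exact hasGradientAt_of_mem_subdiffIci hrad (hk _ (by positivity)) hK

end Gradient

section MeanShift

variable {d n : ℕ} {K : Euc d → ℝ} {Khat Kcheck : ℝ → ℝ} {x : Fin n → Euc d} {h : ℝ} {y : Euc d}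

theorem hasGradientAt_KDE (hrad : ∀ z, K z = Khat (‖z‖ ^ 2 / 2))
    (hsub : ∀ u, 0 < u → -Kcheck u ∈ subdiffIci Khat u)
    (hK : ∀ i, DifferentiableAt ℝ K (h⁻¹ • (y - x i))) :
    HasGradientAt (KDE d n K x h) ((h ^ 2)⁻¹ • (1 / ((n : ℝ) * h ^ d)) •
      ∑ i, Kcheck (‖h⁻¹ • (y - x i)‖ ^ 2 / 2) • (x i - y)) y := by
  have hterm (i : Fin n) : HasGradientAt (fun z => K (h⁻¹ • (z - x i)))
      ((h ^ 2)⁻¹ • Kcheck (‖h⁻¹ • (y - x i)‖ ^ 2 / 2) • (x i - y)) y := by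
    convert hasGradientAt_comp_smul_sub (hasGradientAt_radial hrad hsub (hK i)) using 1
    rw [← inv_pow]
    module
  rw [smul_comm, Finset.smul_sum]
  exact hasGradientAt_const_mul_sum _ fun i _ => hterm i

theorem fcheck_smul_msMap (hy : fcheck d n Kcheck x h y ≠ 0) :
    fcheck d n Kcheck x h y • msMap d n Kcheck x h y =
      (1 / ((n : ℝ) * h ^ d)) • ∑ i, Kcheck (‖h⁻¹ • (y - x i)‖ ^ 2 / 2) • (x i - y) := by
  have hweights : ∑ i, Kcheck (‖h⁻¹ • (y - x i)‖ ^ 2 / 2) ≠ 0 := right_ne_zero_of_mul hy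
  rw [msMap, if_neg hy, fcheck, mul_smul, smul_inv_smul₀ hweights]

theorem ms_update_is_gradient_step_general (hrad : ∀ z, K z = Khat (‖z‖ ^ 2 / 2))
    (hsub : ∀ u, 0 < u → -Kcheck u ∈ subdiffIci Khat u) (hh : h ≠ 0)
    (hK : ∀ i, DifferentiableAt ℝ K (h⁻¹ • (y - x i))) (hy : fcheck d n Kcheck x h y ≠ 0) :
    DifferentiableAt ℝ (KDE d n K x h) y ∧
    msMap d n Kcheck x h y
      = (h ^ 2 / fcheck d n Kcheck x h y) • gradient (KDE d n K x h) y := by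
  have hgrad : HasGradientAt (KDE d n K x h)
      ((h ^ 2)⁻¹ • fcheck d n Kcheck x h y • msMap d n Kcheck x h y) y := by
    rw [fcheck_smul_msMap hy]
    exact hasGradientAt_KDE hrad hsub hK
  refine ⟨hgrad.differentiableAt, ?_⟩
  rw [hgrad.gradient, div_eq_inv_mul, mul_smul, smul_inv_smul₀ (pow_ne_zero 2 hh),
    inv_smul_smul₀ hy]

end MeanShift

/-- Under Assumptions RS and QM, if the kernel `K` is differentiable and
`f̌(y) ≠ 0`, then the KDE `f` is differentiable at `y` and the MS update is a gradient ascent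
step with adaptive step size: `m(y) = (h²/f̌(y)) • ∇f(y)`. -/
theorem ms_update_is_gradient_step
    (d n : ℕ) (hd : 0 < d) (hn : 0 < n)
    (K : Euc d → ℝ) (Khat Kcheck : ℝ → ℝ)
    (hRS : AssumptionRS d K Khat) (hQM : AssumptionQM Khat Kcheck)
    (x : Fin n → Euc d) (h : ℝ) (hh : 0 < h)
    (hK : Differentiable ℝ K)
    (y : Euc d) (hy : fcheck d n Kcheck x h y ≠ 0) :
    DifferentiableAt ℝ (KDE d n K x h) y ∧
    msMap d n Kcheck x h y
      = (h ^ 2 / fcheck d n Kcheck x h y) • gradient (KDE d n K x h) y ∧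
    y + msMap d n Kcheck x h y
      = y + (h ^ 2 / fcheck d n Kcheck x h y) • gradient (KDE d n K x h) y := by
  exact And.imp_right (fun hstep => ⟨hstep, congrArg (y + ·) hstep⟩) <|
    ms_update_is_gradient_step_general hRS.radial hQM.subdiff hh.ne' (fun _ => hK _) hy
end
end
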